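/- Let m, n be positive integers, A = (α_{ij}) ∈ M_{n,m}(𝔽_q((z⁻¹))), α = (α_1, …, α_n) ∈ 𝔽_q((z⁻¹))ⁿ, and s, t positive integers. Suppose that for every polynomial vector u = (u_1, …, u_n) ∈ 𝔽_q[z]ⁿ one has ⟨u_1α_1 + ⋯ + u_nα_n⟩ ≤ max{ q^t · max_{1≤j≤m} ⟨M_j(u)⟩, q^{−s} · ‖u‖ }. Then there exists a polynomial vector b ∈ 𝔽_q[z]^m with ‖b‖ ≤ q^t and ⟨L_i(b) − α_i⟩ ≤ q^{−s} for all 1 ≤ i ≤ n. -/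

import Mathlib

/-!
Common setup: the field `𝔽_q((z⁻¹))` of formal power series over a finite field `K` of
cardinality `q`, modeled as the field `FF K` of formal Laurent series in `t = z⁻¹`,
together with its non-Archimedean norm, the embedding of the polynomial ring `𝔽_q[z]`,
distances to polynomial (vectors), Diophantine exponents, `Bad` sets, continued fractions
and best approximation sequences.
-/

open scoped Classical ENNReal NNReal
open Filter

noncomputable section

set_option linter.unusedSectionVars false

namespace FPSDA

variable (K : Type*) [Field K] [Fintype K]

/-- The field `𝔽_q((z⁻¹))` of formal power series in `z⁻¹` over the finite field `K = 𝔽_q`,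
modeled as the field of formal Laurent series in the variable `t = z⁻¹`. -/
def FF : Type _ := LaurentSeries K

instance : Field (FF K) := inferInstanceAs (Field (LaurentSeries K))

variable {K}

/-- The identity map, viewing an element of `𝔽_q((z⁻¹))` as a Laurent series in `t = z⁻¹`. -/
def toL (x : FF K) : LaurentSeries K := x

@[simp] lemma toL_zero : toL (0 : FF K) = 0 := rfl
@[simp] lemma toL_add (x y : FF K) : toL (x + y) = toL x + toL y := rfl
@[simp] lemma toL_neg (x : FF K) : toL (-x) = -toL x := rfl
@[simp] lemma toL_sub (x y : FF K) : toL (x - y) = toL x - toL y := rfl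
lemma toL_eq_zero {x : FF K} : toL x = 0 ↔ x = 0 := Iff.rfl

/-- The norm `‖x‖ = q ^ (deg x)` on `𝔽_q((z⁻¹))`, where
`deg x = - (order of x as a Laurent series in z⁻¹)`; `‖0‖ = 0`. -/
def fnorm (x : FF K) : ℝ :=
  if toL x = 0 then 0 else (Fintype.card K : ℝ) ^ (-(toL x).order)

lemma one_le_q : (1 : ℝ) ≤ (Fintype.card K : ℝ) := by
  exact_mod_cast Fintype.card_pos

lemma fnorm_nonneg (x : FF K) : 0 ≤ fnorm x := by
  unfold fnorm
  split_ifs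
  · exact le_refl 0
  · exact zpow_nonneg (by positivity) _

lemma fnorm_eq_zero {x : FF K} : fnorm x = 0 ↔ x = 0 := by
  unfold fnorm
  split_ifs with h
  · exact ⟨fun _ => toL_eq_zero.mp h, fun _ => rfl⟩
  · constructor
    · intro hc
      exact absurd hc (zpow_ne_zero _ (by
        have h0 : (0:ℝ) < (Fintype.card K : ℝ) := by positivity
        exact ne_of_gt h0))
    · intro hc
      exact absurd (toL_eq_zero.mpr hc) h

lemma fnorm_neg (x : FF K) : fnorm (-x) = fnorm x := by
  unfold fnorm
  rw [toL_neg]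
  simp [neg_eq_zero, HahnSeries.order_neg]

lemma fnorm_add_le (x y : FF K) : fnorm (x + y) ≤ max (fnorm x) (fnorm y) := by
  by_cases hxy : x + y = 0
  · rw [fnorm_eq_zero.mpr hxy]
    exact le_max_of_le_left (fnorm_nonneg x)
  by_cases hx : x = 0
  · rw [hx, zero_add]
    exact le_max_right _ _
  by_cases hy : y = 0
  · rw [hy, add_zero]
    exact le_max_left _ _
  have horder : min (toL x).order (toL y).order ≤ (toL (x + y)).order := by
    rw [toL_add]
    exact HahnSeries.min_order_le_order_add (show toL x + toL y ≠ 0 from hxy)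
  have h1 : fnorm (x + y) = (Fintype.card K : ℝ) ^ (-(toL (x+y)).order) := by
    unfold fnorm
    rw [if_neg (show toL (x + y) ≠ 0 from hxy)]
  rcases le_total (toL x).order (toL y).order with h | h
  · have h2 : (toL x).order ≤ (toL (x+y)).order := le_trans (by simp [min_eq_left h]) horder
    refine le_max_of_le_left ?_
    rw [h1]
    unfold fnorm
    rw [if_neg (show toL x ≠ 0 from hx)]
    exact zpow_le_zpow_right₀ one_le_q (by omega)
  · have h2 : (toL y).order ≤ (toL (x+y)).order := le_trans (by simp [min_eq_right h]) horder
    refine le_max_of_le_right ?_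
    rw [h1]
    unfold fnorm
    rw [if_neg (show toL y ≠ 0 from hy)]
    exact zpow_le_zpow_right₀ one_le_q (by omega)

/-- The (ultra)metric `dist x y = ‖x - y‖` on `𝔽_q((z⁻¹))`. -/
instance : MetricSpace (FF K) where
  dist x y := fnorm (x - y)
  dist_self x := by
    show fnorm (x - x) = 0
    rw [sub_self]
    exact fnorm_eq_zero.mpr rfl
  dist_comm x y := by
    show fnorm (x - y) = fnorm (y - x)
    have h : x - y = -(y - x) := by ring
    rw [h, fnorm_neg]
  dist_triangle x y z := by
    show fnorm (x - z) ≤ fnorm (x - y) + fnorm (y - z)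
    have h : x - z = (x - y) + (y - z) := by ring
    calc fnorm (x - z) ≤ max (fnorm (x - y)) (fnorm (y - z)) := by
          rw [h]; exact fnorm_add_le _ _
      _ ≤ fnorm (x - y) + fnorm (y - z) :=
        max_le (le_add_of_nonneg_right (fnorm_nonneg _)) (le_add_of_nonneg_left (fnorm_nonneg _))
  eq_of_dist_eq_zero := by
    intro x y h
    have h' : x - y = 0 := fnorm_eq_zero.mp h
    exact sub_eq_zero.mp h'

instance : MeasurableSpace (FF K) := borel _
instance : BorelSpace (FF K) := ⟨rfl⟩

/-- The canonical embedding of the polynomial ring `𝔽_q[z]` into `𝔽_q((z⁻¹))`: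
the variable `z` is sent to `t⁻¹ = single (-1) 1`. -/
def polyF (P : Polynomial K) : FF K :=
  Polynomial.aeval (HahnSeries.single (-1 : ℤ) (1 : K)) P

/-- Supremum norm of a vector with entries in `𝔽_q((z⁻¹))`. -/
def vnorm {ι : Type*} [Fintype ι] (v : ι → FF K) : ℝ := ⨆ i, fnorm (v i)

/-- `⟨v⟩`, the distance from the vector `v` to the nearest polynomial vector. -/
def vdist {ι : Type*} [Fintype ι] (v : ι → FF K) : ℝ :=
  ⨅ y : ι → Polynomial K, vnorm (fun i => v i - polyF (y i))

/-- `⟨x⟩`, the distance from the scalar `x` to the nearest polynomial. -/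
def sdist (x : FF K) : ℝ := ⨅ y : Polynomial K, fnorm (x - polyF y)

/-- The fractional part `{x} = Σ_{i ≥ 1} a_i z^{-i}` of `x = Σ_i a_i z^{-i}`. -/
def fracPart (x : FF K) : FF K :=
  (⟨fun i => if 1 ≤ i then (toL x).coeff i else 0, (toL x).isPWO_support'.mono (by
      intro i hi
      by_cases h : (1:ℤ) ≤ i
      · simpa [Function.mem_support, h] using hi
      · simp [Function.mem_support, h] at hi)⟩ : LaurentSeries K)

/-- The integer part `[x] = Σ_{i ≤ 0} a_i z^{-i}` of `x = Σ_i a_i z^{-i}`, as a polynomial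
in `z`. -/
def intPoly (x : FF K) : Polynomial K :=
  ∑ i ∈ Finset.range ((-(toL x).order).toNat + 1),
    Polynomial.monomial i ((toL x).coeff (-(i : ℤ)))

/-- `x ∈ 𝔽_q((z⁻¹))` is irrational if it is not in `𝔽_q(z)`, i.e. is not a ratio of two
polynomials in `z`. -/
def FIrrational (x : FF K) : Prop :=
  ∀ P Q : Polynomial K, Q ≠ 0 → x * polyF Q ≠ polyF P

section Exponents

variable {m n : ℕ}

/-- The norm `‖x‖ = max_j ‖x_j‖` of a polynomial vector `x`. -/
def pnorm {ι : Type*} [Fintype ι] (x : ι → Polynomial K) : ℝ :=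
  vnorm (fun i => (polyF (x i) : FF K))

/-- The system `⟨A x - θ⟩ ≤ H^{-ω}`, `‖x‖ ≤ H` has a polynomial solution `x`. -/
def Solv (A : Matrix (Fin n) (Fin m) (FF K)) (θ : Fin n → FF K) (ω H : ℝ) : Prop :=
  ∃ x : Fin m → Polynomial K,
    vdist (A.mulVec (fun j => polyF (x j)) - θ) ≤ H ^ (-ω) ∧ pnorm x ≤ H

/-- The system `⟨A x⟩ ≤ H^{-ω}`, `‖x‖ ≤ H` has a nonzero polynomial solution `x`. -/
def SolvHom (A : Matrix (Fin n) (Fin m) (FF K)) (ω H : ℝ) : Prop :=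
  ∃ x : Fin m → Polynomial K, x ≠ 0 ∧
    vdist (A.mulVec (fun j => polyF (x j))) ≤ H ^ (-ω) ∧ pnorm x ≤ H

/-- The inhomogeneous exponent `ω(A, θ)`: the supremum (in `[0,∞]`) of all `ω` such that
for arbitrarily large `H` the system `⟨A x - θ⟩ ≤ H^{-ω}`, `‖x‖ ≤ H` has a polynomial
solution. -/
def omegaInhom (A : Matrix (Fin n) (Fin m) (FF K)) (θ : Fin n → FF K) : ℝ≥0∞ :=
  ⨆ (ω : ℝ) (_ : ∀ H₀ : ℝ, ∃ H : ℝ, H₀ ≤ H ∧ Solv A θ ω H), ENNReal.ofReal ω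

/-- The uniform inhomogeneous exponent `ω̂(A, θ)`: as `ω(A, θ)`, but with a solution for
all sufficiently large `H`. -/
def omegaHatInhom (A : Matrix (Fin n) (Fin m) (FF K)) (θ : Fin n → FF K) : ℝ≥0∞ :=
  ⨆ (ω : ℝ) (_ : ∃ H₀ : ℝ, ∀ H : ℝ, H₀ ≤ H → Solv A θ ω H), ENNReal.ofReal ω

/-- The homogeneous exponent `ω(A)`. -/
def omegaHom (A : Matrix (Fin n) (Fin m) (FF K)) : ℝ≥0∞ :=
  ⨆ (ω : ℝ) (_ : ∀ H₀ : ℝ, ∃ H : ℝ, H₀ ≤ H ∧ SolvHom A ω H), ENNReal.ofReal ω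

/-- The uniform homogeneous exponent `ω̂(A)`. -/
def omegaHatHom (A : Matrix (Fin n) (Fin m) (FF K)) : ℝ≥0∞ :=
  ⨆ (ω : ℝ) (_ : ∃ H₀ : ℝ, ∀ H : ℝ, H₀ ≤ H → SolvHom A ω H), ENNReal.ofReal ω

/-- `A` is non-degenerate: the `𝔽_q[z]`-module `Aᵀ 𝔽_q[z]ⁿ + 𝔽_q[z]^m ⊆ 𝔽_q((z⁻¹))^m` has
rank `m + n` over `𝔽_q[z]`, i.e. its `m + n` natural generators are linearly independent
over `𝔽_q[z]`; equivalently, no nonzero polynomial vector `u` makes `Aᵀ u` a polynomial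
vector. -/
def Nondegenerate (A : Matrix (Fin n) (Fin m) (FF K)) : Prop :=
  ∀ u : Fin n → Polynomial K,
    (∃ v : Fin m → Polynomial K,
      A.transpose.mulVec (fun i => polyF (u i)) = fun j => polyF (v j)) → u = 0

/-- `liminf_{x ∈ 𝔽_q[z]^m, ‖x‖ → ∞} ‖x‖^{m/n} ⟨A x - θ⟩`, computed in `[0, ∞]`. -/
def badLiminf (A : Matrix (Fin n) (Fin m) (FF K)) (θ : Fin n → FF K) : ℝ≥0∞ :=
  Filter.liminf
    (fun x : Fin m → Polynomial K =>
      ENNReal.ofReal ((pnorm x) ^ ((m : ℝ) / (n : ℝ)) *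
        vdist (A.mulVec (fun j => polyF (x j)) - θ)))
    (Filter.comap (fun x : Fin m → Polynomial K => pnorm x) Filter.atTop)

/-- The set `Bad^ε(A)` of `θ` in the unit polydisc `𝕀ⁿ` with
`liminf_{‖x‖ → ∞} ‖x‖^{m/n} ⟨A x - θ⟩ ≥ ε`. -/
def Bad (A : Matrix (Fin n) (Fin m) (FF K)) (ε : ℝ) : Set (Fin n → FF K) :=
  {θ | (∀ i, fnorm (θ i) < 1) ∧ ENNReal.ofReal ε ≤ badLiminf A θ}

/-- The set `Bad(A) = ⋃_{ε > 0} Bad^ε(A)`. -/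
def BadAll (A : Matrix (Fin n) (Fin m) (FF K)) : Set (Fin n → FF K) :=
  ⋃ (ε : ℝ) (_ : 0 < ε), Bad A ε

/-- `M(y) = ⟨Aᵀ y⟩` for a polynomial vector `y`. -/
def Mfun (A : Matrix (Fin n) (Fin m) (FF K)) (y : Fin n → Polynomial K) : ℝ :=
  vdist (A.transpose.mulVec (fun i => polyF (y i)))

/-- `y 1, y 2, …` is a sequence of best approximations related to `Aᵀ`:
`1 = Y_1 < Y_2 < ⋯`, `M_1 > M_2 > ⋯`, and `M(x) ≥ M_k` for every nonzero polynomial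
vector `x` with `‖x‖ < Y_{k+1}` (the value `y 0` is irrelevant). -/
def IsBestApproxSeq (A : Matrix (Fin n) (Fin m) (FF K))
    (y : ℕ → Fin n → Polynomial K) : Prop :=
  pnorm (y 1) = 1 ∧
  (∀ k, 1 ≤ k → pnorm (y k) < pnorm (y (k + 1))) ∧
  (∀ k, 1 ≤ k → Mfun A (y (k + 1)) < Mfun A (y k)) ∧
  (∀ k, 1 ≤ k → ∀ x : Fin n → Polynomial K, x ≠ 0 → pnorm x < pnorm (y (k + 1)) →
    Mfun A (y k) ≤ Mfun A x)

end Exponents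

section Scalar

/-- The system `⟨ξ x - θ⟩ ≤ H^{-ω}`, `‖x‖ ≤ H` has a polynomial solution `x`. -/
def sSolv (ξ θ : FF K) (ω H : ℝ) : Prop :=
  ∃ x : Polynomial K, sdist (ξ * polyF x - θ) ≤ H ^ (-ω) ∧ fnorm (polyF x) ≤ H

/-- The scalar inhomogeneous exponent `ω((ξ), θ)`. -/
def somegaInhom (ξ θ : FF K) : ℝ≥0∞ :=
  ⨆ (ω : ℝ) (_ : ∀ H₀ : ℝ, ∃ H : ℝ, H₀ ≤ H ∧ sSolv ξ θ ω H), ENNReal.ofReal ω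

/-- The scalar uniform inhomogeneous exponent `ω̂((ξ), θ)`. -/
def somegaHatInhom (ξ θ : FF K) : ℝ≥0∞ :=
  ⨆ (ω : ℝ) (_ : ∃ H₀ : ℝ, ∀ H : ℝ, H₀ ≤ H → sSolv ξ θ ω H), ENNReal.ofReal ω

/-- The scalar homogeneous exponent `ω((ξ))`. -/
def somegaHom (ξ : FF K) : ℝ≥0∞ :=
  ⨆ (ω : ℝ) (_ : ∀ H₀ : ℝ, ∃ H : ℝ, H₀ ≤ H ∧ ∃ x : Polynomial K, x ≠ 0 ∧
      sdist (ξ * polyF x) ≤ H ^ (-ω) ∧ fnorm (polyF x) ≤ H), ENNReal.ofReal ω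

/-- `liminf_{x ∈ 𝔽_q[z], ‖x‖ → ∞} ‖x‖ ⟨α x - θ⟩`, computed in `[0, ∞]`. -/
def sBadLiminf (α θ : FF K) : ℝ≥0∞ :=
  Filter.liminf
    (fun x : Polynomial K => ENNReal.ofReal (fnorm (polyF x) * sdist (α * polyF x - θ)))
    (Filter.comap (fun x : Polynomial K => fnorm (polyF x)) Filter.atTop)

/-- The set `Bad^ε(α)` of `θ ∈ 𝕀` with `liminf_{‖x‖ → ∞} ‖x‖ ⟨α x - θ⟩ ≥ ε`. -/
def sBad (α : FF K) (ε : ℝ) : Set (FF K) :=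
  {θ | fnorm θ < 1 ∧ ENNReal.ofReal ε ≤ sBadLiminf α θ}

end Scalar

section CF

/-- The Gauss map `T x = 1/x - [1/x]` on `𝔽_q((z⁻¹))`. -/
def gaussMap (x : FF K) : FF K := fracPart x⁻¹

/-- `pquot α k` is the `(k+1)`-st partial quotient `A_{k+1} = [1 / T^k α]` of the
continued fraction expansion of `α`. -/
def pquot (α : FF K) (k : ℕ) : Polynomial K := intPoly ((gaussMap^[k] α)⁻¹)

/-- `cfQ α k` is the denominator `Q_k` of the `k`-th convergent of the continued fraction
expansion of `α`: `Q_0 = 1`, `Q_1 = A_1`, `Q_{k+2} = A_{k+2} Q_{k+1} + Q_k`. -/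
def cfQ (α : FF K) : ℕ → Polynomial K
  | 0 => 1
  | 1 => pquot α 0
  | (k + 2) => pquot α (k + 1) * cfQ α (k + 1) + cfQ α k

/-- `α` is singular on average: for every `c > 0` the proportion of `l ∈ {1, …, N}` for
which `‖{Q α}‖ ≤ c 2^{-l}` has a solution `Q ∈ 𝔽_q[z]` with `0 < ‖Q‖ ≤ 2^l` tends to `1`
as `N → ∞`. -/
def SingularOnAverage (α : FF K) : Prop :=
  ∀ c : ℝ, 0 < c →
    Filter.Tendsto
      (fun N : ℕ =>
        (((Finset.Icc 1 N).filter (fun l : ℕ =>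
            ∃ Q : Polynomial K, Q ≠ 0 ∧ fnorm (polyF Q) ≤ 2 ^ l ∧
              fnorm (fracPart (polyF Q * α)) ≤ c / 2 ^ l)).card : ℝ) / (N : ℝ))
      Filter.atTop (nhds 1)

end CF

end FPSDA

open FPSDA MeasureTheory

namespace FPSDA

variable {K : Type*} [Field K] [Fintype K]

lemma polyF_add (P Q : Polynomial K) : (polyF (P + Q) : FF K) = polyF P + polyF Q :=
  map_add (Polynomial.aeval (R := K) (HahnSeries.single (-1 : ℤ) (1 : K))) P Q

lemma polyF_sum {ι : Type*} (S : Finset ι) (f : ι → Polynomial K) :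
    (polyF (∑ i ∈ S, f i) : FF K) = ∑ i ∈ S, polyF (f i) :=
  map_sum (Polynomial.aeval (R := K) (HahnSeries.single (-1 : ℤ) (1 : K))) f S

lemma polyF_zero : (polyF (0 : Polynomial K) : FF K) = 0 :=
  map_zero (Polynomial.aeval (R := K) (HahnSeries.single (-1 : ℤ) (1 : K)))

lemma toL_mul (x y : FF K) : toL (x * y) = toL x * toL y := rfl

lemma toL_sum {ι : Type*} (S : Finset ι) (f : ι → FF K) :
    toL (∑ i ∈ S, f i) = ∑ i ∈ S, toL (f i) := rfl

lemma coeff_toL_sum {ι : Type*} (S : Finset ι) (f : ι → FF K) (k : ℤ) :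
    (toL (∑ i ∈ S, f i)).coeff k = ∑ i ∈ S, (toL (f i)).coeff k := by
  rw [toL_sum, HahnSeries.coeff_sum]

lemma polyF_monomial (k : ℕ) (a : K) :
    toL (polyF (Polynomial.monomial k a)) = HahnSeries.single (-(k : ℤ)) a := by
  unfold polyF toL
  rw [Polynomial.aeval_monomial, HahnSeries.single_pow]
  have h : algebraMap K (HahnSeries ℤ K) a = HahnSeries.single 0 a := by
    simp only [algebraMap, Algebra.algebraMap]
    exact HahnSeries.ofPowerSeries_C a
  rw [h]
  simp

lemma coeff_polyF_mul (P : Polynomial K) (x : FF K) (i : ℤ) :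
    (toL (polyF P * x)).coeff i = P.sum fun l a => a * (toL x).coeff (i + l) := by
  induction P using Polynomial.induction_on' with
  | add p r hp hr =>
    rw [polyF_add, add_mul, toL_add, HahnSeries.coeff_add, hp, hr,
      Polynomial.sum_add_index]
    · simp
    · intros; ring
  | monomial k a =>
    rw [toL_mul, polyF_monomial, Polynomial.sum_monomial_index _ _ (by simp)]
    have : i = (i + k) + (-(k : ℤ)) := by ring
    conv_lhs => rw [this]
    rw [HahnSeries.coeff_single_mul_add]

lemma coeff_polyF (P : Polynomial K) (k : ℕ) : (toL (polyF P)).coeff (-(k : ℤ)) = P.coeff k := by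
  induction P using Polynomial.induction_on' with
  | add p r hp hr =>
    rw [polyF_add, toL_add, HahnSeries.coeff_add, hp, hr, Polynomial.coeff_add]
  | monomial j a =>
    rw [polyF_monomial, Polynomial.coeff_monomial, HahnSeries.coeff_single]
    by_cases h : j = k
    · simp [h]
    · rw [if_neg h, if_neg (by omega)]

lemma coeff_polyF_pos (P : Polynomial K) (k : ℤ) (hk : 0 < k) : (toL (polyF P)).coeff k = 0 := by
  induction P using Polynomial.induction_on' with
  | add p r hp hr =>
    rw [polyF_add, toL_add, HahnSeries.coeff_add, hp, hr, add_zero]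
  | monomial j a =>
    rw [polyF_monomial, HahnSeries.coeff_single, if_neg (by omega)]

lemma one_lt_q : (1 : ℝ) < (Fintype.card K : ℝ) := by
  exact_mod_cast Fintype.one_lt_card

lemma fnorm_le_iff (x : FF K) (N : ℤ) :
    fnorm x ≤ (Fintype.card K : ℝ) ^ (-N) ↔ ∀ i < N, (toL x).coeff i = 0 := by
  have hq : (1 : ℝ) < (Fintype.card K : ℝ) := one_lt_q
  by_cases hx : toL x = 0
  · have : fnorm x = 0 := fnorm_eq_zero.mpr hx
    rw [this]
    constructor
    · intro _ i _
      rw [hx]; rfl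
    · intro _
      positivity
  · unfold fnorm
    rw [if_neg hx, zpow_le_zpow_iff_right₀ hq]
    constructor
    · intro h i hi
      exact HahnSeries.coeff_eq_zero_of_lt_order (by omega)
    · intro h
      by_contra hc
      have h1 := h (toL x).order (by omega)
      exact hx (HahnSeries.coeff_order_eq_zero.mp h1)

lemma coeff_intPoly (x : FF K) (k : ℕ) :
    (intPoly x).coeff k = (toL x).coeff (-(k : ℤ)) := by
  unfold intPoly
  rw [Polynomial.finsetSum_coeff]
  simp only [Polynomial.coeff_monomial]
  rw [Finset.sum_ite_eq']
  split_ifs with h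
  · rfl
  · rw [Finset.mem_range] at h
    exact (HahnSeries.coeff_eq_zero_of_lt_order (by omega)).symm

lemma sdist_le_iff (x : FF K) (N : ℤ) :
    sdist x ≤ (Fintype.card K : ℝ) ^ (-N) ↔ ∀ i, 1 ≤ i → i < N → (toL x).coeff i = 0 := by
  have hq : (1 : ℝ) < (Fintype.card K : ℝ) := one_lt_q
  constructor
  · intro h i hi hiN
    by_contra hc
    have h1 : (Fintype.card K : ℝ) ^ (-i) ≤ sdist x := by
      apply le_ciInf
      intro y
      by_contra hlt
      push Not at hlt
      unfold fnorm at hlt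
      split_ifs at hlt with h0
      · apply hc
        have h2 : (toL (x - polyF y)).coeff i = 0 := by rw [h0]; rfl
        rwa [toL_sub, HahnSeries.coeff_sub, coeff_polyF_pos _ _ (by omega), sub_zero] at h2
      · rw [zpow_lt_zpow_iff_right₀ hq] at hlt
        have h2 : (toL (x - polyF y)).coeff i = 0 :=
          HahnSeries.coeff_eq_zero_of_lt_order (by omega)
        apply hc
        rwa [toL_sub, HahnSeries.coeff_sub, coeff_polyF_pos _ _ (by omega), sub_zero] at h2
    have h3 := h1.trans h
    rw [zpow_le_zpow_iff_right₀ hq] at h3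
    omega
  · intro h
    have hb : BddBelow (Set.range fun y : Polynomial K => fnorm (x - polyF y)) :=
      ⟨0, by rintro _ ⟨y, rfl⟩; exact fnorm_nonneg _⟩
    refine (ciInf_le hb (intPoly x)).trans ?_
    rw [fnorm_le_iff]
    intro i hi
    rw [toL_sub, HahnSeries.coeff_sub]
    by_cases h1 : 1 ≤ i
    · rw [h i h1 hi, coeff_polyF_pos _ _ (by omega), sub_zero]
    · obtain ⟨k, rfl⟩ : ∃ k : ℕ, i = -(k : ℤ) := ⟨(-i).toNat, by omega⟩
      rw [coeff_polyF, coeff_intPoly, sub_self]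

lemma pnorm_le {m : ℕ} (b : Fin m → Polynomial K) (N : ℕ) (e : ℤ) (he : e + 1 = N)
    (hb : ∀ j k, N ≤ k → (b j).coeff k = 0) :
    pnorm b ≤ (Fintype.card K : ℝ) ^ e := by
  refine Real.iSup_le (fun j => ?_) (by positivity)
  have := (fnorm_le_iff (polyF (b j)) (-e)).mpr ?_
  · simpa using this
  · intro i hi
    by_cases h1 : 1 ≤ i
    · exact coeff_polyF_pos _ _ (by omega)
    · obtain ⟨k, rfl⟩ : ∃ k : ℕ, i = -(k : ℤ) := ⟨(-i).toNat, by omega⟩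
      rw [coeff_polyF]
      exact hb j k (by omega)

/-- The space of truncated fractional parts of `A b`. -/
def truncImage {m n : ℕ} (A : Matrix (Fin n) (Fin m) (FF K)) (r t : ℕ) :
    Submodule K (Fin n × Fin r → K) where
  carrier := {v | ∃ b : Fin m → Polynomial K, (∀ j k, t + 1 ≤ k → (b j).coeff k = 0) ∧
    ∀ p, v p = ∑ j, (toL (polyF (b j) * A p.1 j)).coeff ((p.2 : ℕ) + 1 : ℤ)}
  zero_mem' := ⟨0, by simp, by
    intro p
    simp [polyF_zero]⟩
  add_mem' := by
    rintro v w ⟨b, hb, hv⟩ ⟨c, hc, hw⟩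
    refine ⟨b + c, ?_, ?_⟩
    · intro j k hk
      simp [hb j k hk, hc j k hk]
    · intro p
      simp [hv p, hw p, polyF_add, add_mul, Finset.sum_add_distrib]
  smul_mem' := by
    rintro a v ⟨b, hb, hv⟩
    refine ⟨a • b, ?_, ?_⟩
    · intro j k hk
      simp [hb j k hk]
    · intro p
      rw [Pi.smul_apply, hv p, smul_eq_mul, Finset.mul_sum]
      refine Finset.sum_congr rfl fun j _ => ?_
      rw [Pi.smul_apply, coeff_polyF_mul, coeff_polyF_mul,
        Polynomial.sum_smul_index _ _ _ (by simp), Polynomial.sum, Polynomial.sum,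
        Finset.mul_sum]
      refine Finset.sum_congr rfl fun l _ => ?_
      ring

end FPSDA

/-- Transference (Corollary 4.2 of the paper): if
`⟨u₁α₁ + ⋯ + u_nα_n⟩ ≤ max (q^t · max_j ⟨M_j(u)⟩) (q^{-s} · ‖u‖)` for every polynomial
vector `u`, then there is a polynomial vector `b` with `‖b‖ ≤ q^t` and
`⟨L_i(b) - α_i⟩ ≤ q^{-s}` for all `i`. -/
theorem transference_corollary {K : Type*} [Field K] [Fintype K] {m n : ℕ}
    (hm : 0 < m) (hn : 0 < n)
    (A : Matrix (Fin n) (Fin m) (FF K)) (α : Fin n → FF K)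
    (s t : ℕ) (hs : 0 < s) (ht : 0 < t)
    (h : ∀ u : Fin n → Polynomial K,
      sdist (∑ i, polyF (u i) * α i) ≤
        max ((Fintype.card K : ℝ) ^ (t : ℤ) *
              ⨆ j, sdist (A.transpose.mulVec (fun i => polyF (u i)) j))
            ((Fintype.card K : ℝ) ^ (-(s : ℤ)) * pnorm u)) :
    ∃ b : Fin m → Polynomial K, pnorm b ≤ (Fintype.card K : ℝ) ^ (t : ℤ) ∧
      ∀ i, sdist (A.mulVec (fun j => polyF (b j)) i - α i) ≤
        (Fintype.card K : ℝ) ^ (-(s : ℤ)) := by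
  classical
  have hq : (1 : ℝ) < (Fintype.card K : ℝ) := one_lt_q
  set a : Fin n × Fin (s - 1) → K := fun p => (toL (α p.1)).coeff ((p.2 : ℕ) + 1 : ℤ) with ha
  have key : a ∈ truncImage A (s - 1) t := by
    by_contra hna
    obtain ⟨f, hfa, hfW⟩ := Submodule.exists_le_ker_of_notMem hna
    have hf : ∀ v, f v = ∑ i, ∑ l, v (i, l) * f (Pi.single (i, l) 1) := by
      intro v
      rw [LinearMap.pi_apply_eq_sum_univ f v, Fintype.sum_prod_type]
      refine Finset.sum_congr rfl fun i _ => Finset.sum_congr rfl fun l _ => ?_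
      rw [smul_eq_mul]
      congr 2
      ext p
      simp [Pi.single_apply, eq_comm]
    set u : Fin n → Polynomial K := fun i =>
      ∑ l : Fin (s - 1), Polynomial.monomial (l : ℕ) (f (Pi.single (i, l) 1)) with hu
    have hcoef : ∀ i (x : FF K) (k : ℤ), (toL (polyF (u i) * x)).coeff k =
        ∑ l : Fin (s - 1), f (Pi.single (i, l) 1) * (toL x).coeff (k + (l : ℕ)) := by
      intro i x k
      simp only [hu]
      rw [polyF_sum, Finset.sum_mul, coeff_toL_sum]
      refine Finset.sum_congr rfl fun l _ => ?_
      rw [coeff_polyF_mul, Polynomial.sum_monomial_index _ _ (by simp)]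
    have h1 := h u
    have h2 : max ((Fintype.card K : ℝ) ^ (t : ℤ) *
              ⨆ j, sdist (A.transpose.mulVec (fun i => polyF (u i)) j))
            ((Fintype.card K : ℝ) ^ (-(s : ℤ)) * pnorm u) ≤ (Fintype.card K : ℝ) ^ (-2 : ℤ) := by
      refine max_le ?_ ?_
      · have h3 : ⨆ j, sdist (A.transpose.mulVec (fun i => polyF (u i)) j) ≤
            (Fintype.card K : ℝ) ^ (-((t : ℤ) + 2)) := by
          refine Real.iSup_le (fun j => ?_) (by positivity)
          rw [sdist_le_iff]
          intro i hi hi2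
          obtain ⟨k, rfl⟩ : ∃ k : ℕ, i = (k : ℤ) + 1 := ⟨(i - 1).toNat, by omega⟩
          have hmem : (fun p : Fin n × Fin (s - 1) =>
              (toL (A p.1 j)).coeff (((p.2 : ℕ) : ℤ) + 1 + k)) ∈ truncImage A (s - 1) t := by
            refine ⟨Pi.single j (Polynomial.monomial k 1), ?_, ?_⟩
            · intro j' k' hk'
              by_cases hj : j' = j
              · subst hj
                rw [Pi.single_eq_same, Polynomial.coeff_monomial, if_neg (by omega)]
              · simp [hj]
            · intro p
              rw [Finset.sum_eq_single j]
              · rw [Pi.single_eq_same, coeff_polyF_mul,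
                  Polynomial.sum_monomial_index _ _ (by simp), one_mul]
              · intro j' _ hj
                simp [hj, polyF_zero]
              · simp
          have h4 := hfW hmem
          rw [LinearMap.mem_ker, hf] at h4
          simp only [Matrix.mulVec, dotProduct, Matrix.transpose_apply]
          rw [coeff_toL_sum, ← h4]
          refine Finset.sum_congr rfl fun i _ => ?_
          rw [mul_comm, hcoef]
          refine Finset.sum_congr rfl fun l _ => ?_
          rw [mul_comm]
          congr 2
          ring
        calc _ ≤ (Fintype.card K : ℝ) ^ (t : ℤ) * (Fintype.card K : ℝ) ^ (-((t : ℤ) + 2)) := by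
              gcongr
          _ = _ := by
              rw [← zpow_add₀ (by positivity)]
              congr 1
              ring
      · have h3 : pnorm u ≤ (Fintype.card K : ℝ) ^ ((s : ℤ) - 2) := by
          refine pnorm_le u (s - 1) _ (by omega) ?_
          intro i k hk
          rw [hu]
          simp only [Polynomial.finsetSum_coeff, Polynomial.coeff_monomial]
          refine Finset.sum_eq_zero fun l _ => ?_
          rw [if_neg (by omega)]
        calc _ ≤ (Fintype.card K : ℝ) ^ (-(s : ℤ)) * (Fintype.card K : ℝ) ^ ((s : ℤ) - 2) := by
              gcongr
          _ = _ := by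
              rw [← zpow_add₀ (by positivity)]
              congr 1
              ring
    have h5 := (sdist_le_iff _ 2).mp (h1.trans h2) 1 le_rfl (by norm_num)
    apply hfa
    rw [hf, ← h5, coeff_toL_sum]
    refine Finset.sum_congr rfl fun i _ => ?_
    rw [hcoef]
    refine Finset.sum_congr rfl fun l _ => ?_
    rw [mul_comm, ha, add_comm (1 : ℤ)]
  obtain ⟨b, hb, hab⟩ := key
  refine ⟨b, pnorm_le b (t + 1) _ (by push_cast; ring) hb, fun i => ?_⟩
  rw [sdist_le_iff]
  intro k hk hks
  obtain ⟨l, rfl⟩ : ∃ l : ℕ, k = (l : ℤ) + 1 := ⟨(k - 1).toNat, by omega⟩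
  have h6 := hab (i, ⟨l, by omega⟩)
  simp only [ha] at h6
  rw [toL_sub, HahnSeries.coeff_sub, h6]
  simp only [Matrix.mulVec, dotProduct]
  rw [coeff_toL_sum, sub_eq_zero]
  refine Finset.sum_congr rfl fun j _ => ?_
  rw [mul_comm]
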